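/- Let T ≥ 1, let ℓ¹, …, ℓᵀ ∈ ℝ^n, and let w¹, …, wᵀ > 0 and τ¹, …, τᵀ > 0 be such that the sequence t ↦ τ^t/w^t is non-increasing. Run WCFR+: set R⁰ = 0 ∈ ℝ^n and, for 1 ≤ t ≤ T, x^t = N(R^{t−1}), r^t = ⟨ℓ^t, x^t⟩·𝟏 − ℓ^t, and R^t = [R^{t−1} + w^t r^t]⁺. Then the total weighted regret satisfies max_{x′ ∈ Δ^n} Σ_{t=1}^T τ^t ⟨ℓ^t, x^t − x′⟩ ≤ √( (τ¹/w¹) · Σ_{t=1}^T τ^t w^t ‖r^t‖₂² ). -/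

import Mathlib

open Finset
open scoped Classical

/-- Euclidean dot product on `Fin n → ℝ`. -/
def dotp {n : ℕ} (a b : Fin n → ℝ) : ℝ := ∑ i, a i * b i

/-- Componentwise positive part. -/
def clipPos {n : ℕ} (v : Fin n → ℝ) : Fin n → ℝ := fun i => max (v i) 0

/-- Normalization `N(v) = v / ‖v‖₁`, with `N(0)` the uniform distribution. -/
noncomputable def nmz {n : ℕ} (v : Fin n → ℝ) : Fin n → ℝ :=
  if v = 0 then (fun _ => (1 : ℝ) / n) else fun i => v i / ∑ j, |v j|

/-!
WCFR+ is projected online gradient ascent on the nonnegative orthant, with step sizes `wᵗ`: each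
step moves from `Rᵗ⁻¹` along `wᵗ rᵗ` and projects back. Because `xᵗ` is proportional to `Rᵗ⁻¹`, the
vector `rᵗ` is orthogonal to `Rᵗ⁻¹`, so the gain of a comparator `y ≥ 0` over the iterates is just
`Σ τᵗ ⟨rᵗ, y⟩`. The potential `‖Rᵗ - y‖²` with the non-increasing weights `τᵗ / wᵗ` telescopes to
`2 Σ τᵗ ⟨rᵗ, y⟩ ≤ (τ¹ / w¹) ‖y‖² + Σ τᵗ wᵗ ‖rᵗ‖²`.
The orthant is a cone, so this holds for every multiple `c • x'`, `c ≥ 0`, of a point of the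
simplex; optimizing over `c` gives the square root.
-/

lemma sum_Icc_mul_sub_le_of_antitoneOn {R : Type*} [Ring R] [PartialOrder R] [IsOrderedRing R]
    {a D : ℕ → R} {T : ℕ} (hT : 1 ≤ T) (ha : AntitoneOn a (Set.Icc 1 T)) (hD : ∀ t, 0 ≤ D t) :
    ∑ t ∈ Icc 1 T, a t * (D (t - 1) - D t) ≤ a 1 * D 0 - a T * D T := by
  induction T, hT using Nat.le_induction with
  | base => simp [mul_sub]
  | succ T hT ih =>
    have ha_succ : a (T + 1) ≤ a T := ha ⟨hT, T.le_succ⟩ ⟨by omega, le_rfl⟩ T.le_succ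
    have ih := ih (ha.mono (Set.Icc_subset_Icc_right T.le_succ))
    rw [sum_Icc_succ_top (by omega), Nat.add_sub_cancel]
    calc ∑ t ∈ Icc 1 T, a t * (D (t - 1) - D t) + a (T + 1) * (D T - D (T + 1))
        ≤ a 1 * D 0 - a T * D T + a (T + 1) * (D T - D (T + 1)) := by gcongr
      _ = a 1 * D 0 - a (T + 1) * D (T + 1) - (a T - a (T + 1)) * D T := by noncomm_ring
      _ ≤ a 1 * D 0 - a (T + 1) * D (T + 1) :=
        sub_le_self _ (mul_nonneg (sub_nonneg.2 ha_succ) (hD T))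

lemma le_sqrt_mul_of_forall_two_mul_le {A B a : ℝ}
    (h : ∀ c, 0 ≤ c → 2 * (c * A) ≤ a * c ^ 2 + B) : A ≤ √(a * B) := by
  rcases le_or_gt A 0 with hA | hA
  · exact hA.trans (Real.sqrt_nonneg _)
  have quadratic_nonneg (c : ℝ) : 0 ≤ a * (c * c) + -2 * A * c + B := by
    have habs := h |c| (abs_nonneg c)
    rw [sq_abs] at habs
    nlinarith [le_abs_self c]
  have hdiscrim := discrim_le_zero quadratic_nonneg
  rw [discrim] at hdiscrim
  exact Real.le_sqrt_of_sq_le (by linarith)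

section GradientAscent

open scoped RealInnerProductSpace

variable {E : Type*} [NormedAddCommGroup E] [InnerProductSpace ℝ E]

lemma two_mul_inner_sub_le_of_norm_sub_le {u v r y : E} {w : ℝ}
    (hv : ‖v - y‖ ≤ ‖u + w • r - y‖) :
    2 * (w * ⟪r, y - u⟫) ≤ ‖u - y‖ ^ 2 - ‖v - y‖ ^ 2 + w ^ 2 * ‖r‖ ^ 2 := by
  have expand : ‖u + w • r - y‖ ^ 2 = ‖u - y‖ ^ 2 - 2 * (w * ⟪r, y - u⟫) + w ^ 2 * ‖r‖ ^ 2 := by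
    rw [add_sub_right_comm, norm_add_sq_real, norm_smul, mul_pow, Real.norm_eq_abs, sq_abs,
      inner_smul_right, real_inner_comm, ← neg_sub y u, inner_neg_right]
    ring
  have := pow_le_pow_left₀ (norm_nonneg _) hv 2
  linarith

variable {R r : ℕ → E} {w τ : ℕ → ℝ} {T : ℕ}

theorem two_mul_sum_inner_sub_le (hT : 1 ≤ T) (hw : ∀ t ∈ Icc 1 T, 0 < w t)
    (hτ : ∀ t ∈ Icc 1 T, 0 ≤ τ t) (hanti : AntitoneOn (fun t ↦ τ t / w t) (Set.Icc 1 T)) {y : E}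
    (hR : ∀ t ∈ Icc 1 T, ‖R t - y‖ ≤ ‖R (t - 1) + w t • r t - y‖) :
    2 * ∑ t ∈ Icc 1 T, τ t * ⟪r t, y - R (t - 1)⟫ ≤
      τ 1 / w 1 * ‖R 0 - y‖ ^ 2 + ∑ t ∈ Icc 1 T, τ t * w t * ‖r t‖ ^ 2 := by
  have step : ∀ t ∈ Icc 1 T, 2 * (τ t * ⟪r t, y - R (t - 1)⟫) ≤
      τ t / w t * (‖R (t - 1) - y‖ ^ 2 - ‖R t - y‖ ^ 2) + τ t * w t * ‖r t‖ ^ 2 := by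
    intro t ht
    have hτw : τ t / w t * w t = τ t := div_mul_cancel₀ _ (hw t ht).ne'
    have hweight : 0 ≤ τ t / w t := div_nonneg (hτ t ht) (hw t ht).le
    calc 2 * (τ t * ⟪r t, y - R (t - 1)⟫)
        = τ t / w t * (2 * (w t * ⟪r t, y - R (t - 1)⟫)) := by
          linear_combination (-2 * ⟪r t, y - R (t - 1)⟫) * hτw
      _ ≤ τ t / w t * (‖R (t - 1) - y‖ ^ 2 - ‖R t - y‖ ^ 2 + w t ^ 2 * ‖r t‖ ^ 2) := by
          gcongr
          exact two_mul_inner_sub_le_of_norm_sub_le (hR t ht)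
      _ = _ := by linear_combination w t * ‖r t‖ ^ 2 * hτw
  have telescope := sum_Icc_mul_sub_le_of_antitoneOn hT hanti fun t ↦ sq_nonneg ‖R t - y‖
  have hT_mem : T ∈ Icc 1 T := right_mem_Icc.2 hT
  have last_nonneg : 0 ≤ τ T / w T * ‖R T - y‖ ^ 2 :=
    mul_nonneg (div_nonneg (hτ T hT_mem) (hw T hT_mem).le) (sq_nonneg _)
  calc 2 * ∑ t ∈ Icc 1 T, τ t * ⟪r t, y - R (t - 1)⟫
      ≤ ∑ t ∈ Icc 1 T, (τ t / w t * (‖R (t - 1) - y‖ ^ 2 - ‖R t - y‖ ^ 2)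
          + τ t * w t * ‖r t‖ ^ 2) := by
        rw [mul_sum]
        exact sum_le_sum step
    _ ≤ τ 1 / w 1 * ‖R 0 - y‖ ^ 2 + ∑ t ∈ Icc 1 T, τ t * w t * ‖r t‖ ^ 2 := by
        rw [sum_add_distrib]
        linarith

theorem sum_inner_le_sqrt_mul_norm (hT : 1 ≤ T) (hw : ∀ t ∈ Icc 1 T, 0 < w t)
    (hτ : ∀ t ∈ Icc 1 T, 0 ≤ τ t) (hanti : AntitoneOn (fun t ↦ τ t / w t) (Set.Icc 1 T))
    (hR0 : R 0 = 0) (hinner : ∀ t ∈ Icc 1 T, ⟪r t, R (t - 1)⟫ ≤ 0) {y : E}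
    (hR : ∀ t ∈ Icc 1 T, ∀ c : ℝ, 0 ≤ c → ‖R t - c • y‖ ≤ ‖R (t - 1) + w t • r t - c • y‖) :
    ∑ t ∈ Icc 1 T, τ t * ⟪r t, y⟫ ≤
      √(τ 1 / w 1 * ∑ t ∈ Icc 1 T, τ t * w t * ‖r t‖ ^ 2) * ‖y‖ := by
  set S := ∑ t ∈ Icc 1 T, τ t * w t * ‖r t‖ ^ 2
  have scaled (c : ℝ) (hc : 0 ≤ c) : 2 * (c * ∑ t ∈ Icc 1 T, τ t * ⟪r t, y⟫) ≤
      τ 1 / w 1 * ‖y‖ ^ 2 * c ^ 2 + S := by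
    have gain_le : c * ∑ t ∈ Icc 1 T, τ t * ⟪r t, y⟫ ≤
        ∑ t ∈ Icc 1 T, τ t * ⟪r t, c • y - R (t - 1)⟫ := by
      rw [mul_sum]
      refine sum_le_sum fun t ht ↦ ?_
      rw [mul_left_comm, inner_sub_right, inner_smul_right]
      exact mul_le_mul_of_nonneg_left (by linarith [hinner t ht]) (hτ t ht)
    calc 2 * (c * ∑ t ∈ Icc 1 T, τ t * ⟪r t, y⟫)
        ≤ 2 * ∑ t ∈ Icc 1 T, τ t * ⟪r t, c • y - R (t - 1)⟫ := by gcongr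
      _ ≤ τ 1 / w 1 * ‖R 0 - c • y‖ ^ 2 + S :=
          two_mul_sum_inner_sub_le hT hw hτ hanti fun t ht ↦ hR t ht c hc
      _ = τ 1 / w 1 * ‖y‖ ^ 2 * c ^ 2 + S := by
          rw [hR0, zero_sub, norm_neg, norm_smul, mul_pow, Real.norm_eq_abs, sq_abs]
          ring
  calc ∑ t ∈ Icc 1 T, τ t * ⟪r t, y⟫
      ≤ √(τ 1 / w 1 * ‖y‖ ^ 2 * S) := le_sqrt_mul_of_forall_two_mul_le scaled
    _ = √(τ 1 / w 1 * S) * ‖y‖ := by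
      rw [mul_right_comm, Real.sqrt_mul' _ (sq_nonneg _), Real.sqrt_sq (norm_nonneg y)]

end GradientAscent

section RegretMatching

open WithLp (toLp)
open scoped RealInnerProductSpace

lemma norm_toLp_le_one_of_mem_stdSimplex {ι : Type*} [Fintype ι] {y : ι → ℝ}
    (hy : y ∈ stdSimplex ℝ ι) : ‖toLp 2 y‖ ≤ 1 := by
  refine (sq_le_one_iff₀ (norm_nonneg _)).1 ?_
  calc ‖toLp 2 y‖ ^ 2 = ∑ i, y i ^ 2 := EuclideanSpace.real_norm_sq_eq _
    _ ≤ (∑ i, y i) ^ 2 := sum_sq_le_sq_sum_of_nonneg fun i _ ↦ hy.1 i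
    _ = 1 := by rw [hy.2, one_pow]

variable {n : ℕ}

lemma inner_toLp_eq_dotp (u v : Fin n → ℝ) : ⟪toLp 2 u, toLp 2 v⟫ = dotp u v := by
  simp [dotp, PiLp.inner_apply, mul_comm]

lemma clipPos_nonneg (v : Fin n → ℝ) : 0 ≤ clipPos v := fun _ ↦ le_max_right _ _

lemma norm_toLp_clipPos_sub_le (v : Fin n → ℝ) {y : Fin n → ℝ} (hy : 0 ≤ y) :
    ‖toLp 2 (clipPos v) - toLp 2 y‖ ≤ ‖toLp 2 v - toLp 2 y‖ := by
  refine le_of_sq_le_sq ?_ (norm_nonneg _)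
  rw [EuclideanSpace.real_norm_sq_eq, EuclideanSpace.real_norm_sq_eq]
  refine sum_le_sum fun i _ ↦ sq_le_sq.2 ?_
  calc |max (v i) 0 - y i| = |max (v i) 0 - max (y i) 0| := by
        rw [max_eq_left (show 0 ≤ y i from hy i)]
    _ ≤ |v i - y i| := abs_max_sub_max_le_abs _ _ _

lemma sum_mul_dotp_nmz (l : Fin n → ℝ) {v : Fin n → ℝ} (hv : 0 ≤ v) :
    (∑ i, v i) * dotp l (nmz v) = dotp l v := by
  by_cases h : v = 0
  · simp [h, dotp]
  have hsum : ∑ i, v i ≠ 0 := fun h0 ↦ h ((Fintype.sum_eq_zero_iff_of_nonneg hv).1 h0)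
  have habs : ∑ i, |v i| = ∑ i, v i := sum_congr rfl fun i _ ↦ abs_of_nonneg (hv i)
  simp only [dotp, nmz, if_neg h, habs, mul_sum]
  refine sum_congr rfl fun i _ ↦ ?_
  field_simp

/-- The instantaneous regret `⟨l, x⟩ 𝟏 - l`: its `i`-th entry is the loss that playing `x`
against the loss vector `l` incurs in excess of the `i`-th pure action. -/
def instRegret (l x : Fin n → ℝ) : Fin n → ℝ := fun i ↦ dotp l x - l i

lemma dotp_instRegret (l x y : Fin n → ℝ) :
    dotp (instRegret l x) y = (∑ i, y i) * dotp l x - dotp l y := by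
  simp only [dotp, instRegret, sub_mul, sum_sub_distrib, ← mul_sum]
  rw [mul_comm]

lemma dotp_instRegret_of_sum_eq_one (l x : Fin n → ℝ) {y : Fin n → ℝ} (hy : ∑ i, y i = 1) :
    dotp (instRegret l x) y = dotp l (x - y) := by
  rw [dotp_instRegret, hy, one_mul]
  simp only [dotp, Pi.sub_apply, mul_sub, sum_sub_distrib]

lemma dotp_instRegret_nmz_self (l : Fin n → ℝ) {v : Fin n → ℝ} (hv : 0 ≤ v) :
    dotp (instRegret l (nmz v)) v = 0 := by
  rw [dotp_instRegret, sum_mul_dotp_nmz l hv, sub_self]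

theorem sum_dotp_le_sqrt_mul_norm {R r : ℕ → Fin n → ℝ} {w τ : ℕ → ℝ} {T : ℕ} (hT : 1 ≤ T)
    (hw : ∀ t ∈ Icc 1 T, 0 < w t) (hτ : ∀ t ∈ Icc 1 T, 0 ≤ τ t)
    (hanti : AntitoneOn (fun t ↦ τ t / w t) (Set.Icc 1 T)) (hR0 : R 0 = 0)
    (hdotp : ∀ t ∈ Icc 1 T, dotp (r t) (R (t - 1)) ≤ 0)
    (hR : ∀ t ∈ Icc 1 T, R t = clipPos (R (t - 1) + w t • r t)) {y : Fin n → ℝ} (hy : 0 ≤ y) :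
    ∑ t ∈ Icc 1 T, τ t * dotp (r t) y ≤
      √(τ 1 / w 1 * ∑ t ∈ Icc 1 T, τ t * w t * ∑ i, r t i ^ 2) * ‖toLp 2 y‖ := by
  have ascent (t) (ht : t ∈ Icc 1 T) (c : ℝ) (hc : 0 ≤ c) :
      ‖toLp 2 (R t) - c • toLp 2 y‖ ≤
        ‖toLp 2 (R (t - 1)) + w t • toLp 2 (r t) - c • toLp 2 y‖ := by
    rw [hR t ht]
    exact norm_toLp_clipPos_sub_le _ (smul_nonneg hc hy)
  simpa only [inner_toLp_eq_dotp, EuclideanSpace.real_norm_sq_eq] using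
    sum_inner_le_sqrt_mul_norm (R := fun t ↦ toLp 2 (R t)) (r := fun t ↦ toLp 2 (r t))
      hT hw hτ hanti (by rw [hR0, WithLp.toLp_zero])
      (fun t ht ↦ (inner_toLp_eq_dotp _ _).trans_le (hdotp t ht)) ascent

end RegretMatching

/-- The per-decision-node weighted counterfactual regret bound of WCFR+ (from the proof
of Theorem 3): running `R⁰ = 0`, `xᵗ = N(Rᵗ⁻¹)`, `rᵗ = ⟨ℓᵗ, xᵗ⟩·𝟏 − ℓᵗ`,
`Rᵗ = [Rᵗ⁻¹ + wᵗrᵗ]⁺` with `τᵗ/wᵗ` non-increasing gives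
`max_{x′∈Δⁿ} Σ_t τᵗ⟨ℓᵗ, xᵗ − x′⟩ ≤ √((τ¹/w¹)·Σ_t τᵗwᵗ‖rᵗ‖₂²)`. -/
theorem stmt11 (n T : ℕ) (hn : 0 < n) (hT : 1 ≤ T)
    (ℓ : ℕ → Fin n → ℝ) (w τ : ℕ → ℝ)
    (hw : ∀ t ∈ Icc 1 T, 0 < w t) (hτ : ∀ t ∈ Icc 1 T, 0 < τ t)
    (hmono : ∀ t, 1 ≤ t → t < T → τ (t + 1) / w (t + 1) ≤ τ t / w t)
    (R x r : ℕ → Fin n → ℝ)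
    (hR0 : R 0 = 0)
    (hx : ∀ t ∈ Icc 1 T, x t = nmz (R (t - 1)))
    (hr : ∀ t ∈ Icc 1 T, r t = fun i => dotp (ℓ t) (x t) - ℓ t i)
    (hR : ∀ t ∈ Icc 1 T, R t = clipPos (fun i => R (t - 1) i + w t * r t i)) :
    ∀ x' ∈ stdSimplex ℝ (Fin n),
      ∑ t ∈ Icc 1 T, τ t * dotp (ℓ t) (x t - x') ≤
        Real.sqrt ((τ 1 / w 1) * ∑ t ∈ Icc 1 T, τ t * w t * ∑ i, (r t i) ^ 2) := by
  intro y hy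
  have hanti : AntitoneOn (fun t ↦ τ t / w t) (Set.Icc 1 T) :=
    antitoneOn_of_succ_le Set.ordConnected_Icc fun t _ ht hst ↦ hmono t ht.1 hst.2
  have hR_nonneg : ∀ t ∈ Icc 1 T, 0 ≤ R (t - 1) := by
    intro t ht
    rcases (mem_Icc.1 ht).1.eq_or_lt with rfl | h
    · exact hR0.ge
    · rw [hR (t - 1) (by grind)]
      exact clipPos_nonneg _
  have horth : ∀ t ∈ Icc 1 T, dotp (r t) (R (t - 1)) = 0 := by
    intro t ht
    rw [hr t ht, hx t ht]
    exact dotp_instRegret_nmz_self _ (hR_nonneg t ht)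
  have regret_eq : ∀ t ∈ Icc 1 T, dotp (ℓ t) (x t - y) = dotp (r t) y := by
    intro t ht
    rw [hr t ht]
    exact (dotp_instRegret_of_sum_eq_one _ _ hy.2).symm
  rw [sum_congr rfl fun t ht ↦ congrArg (τ t * ·) (regret_eq t ht)]
  exact (sum_dotp_le_sqrt_mul_norm hT hw (fun t ht ↦ (hτ t ht).le) hanti hR0
    (fun t ht ↦ (horth t ht).le) hR hy.1).trans
    (mul_le_of_le_one_right (Real.sqrt_nonneg _) (norm_toLp_le_one_of_mem_stdSimplex hy))
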